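/- The group B = ⟨a, d, s | asa⁻¹s⁻², dsd⁻¹s⁻²⟩ satisfies CL_B(n) ≼ n; that is, there is a constant C > 0 such that whenever words u, v over {a,d,s}^{±1} with |u| + |v| ≤ n represent conjugate elements of B, there is a word w with |w| ≤ C·n + C and wuw⁻¹ = v in B. -/

import Mathlib

/-!
`B` acts on its Bass–Serre tree, whose vertex stabilisers are the conjugates of `⟨s⟩`. Among all
conjugators between cyclic rotations of the two words choose one moving the base vertex as little as
possible. The geodesic it spans, translated by the two conjugate elements, bounds a rectangle in a
tree, which must be degenerate: either the conjugator is a power `s ^ p`, or both rotated words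
represent powers of `s`.

Both cases are settled by the affine action `s ↦ (x ↦ x + 1)`, `a, d ↦ (x ↦ 2 * x)` on the line.
Two powers of `s` are conjugate only if their exponents differ by a power of `2`, which is
exponentially bounded and is realised by conjugation by a power of `a`. If `s ^ p` conjugates `u` to
`v` and `v` has slope different from `1`, comparing translation parts bounds `p` exponentially; if
`v` has slope `1`, it commutes with `s ^ (2 ^ |v|)`, so `p` may be reduced modulo `2 ^ |v|`. Finally
`s` is exponentially distorted, so such an `s ^ p` has linear word length.
-/

namespace AnnDehn

/-- A word over the alphabet `X`: a list of letters together with exponents `±1`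
(`true` = the letter itself, `false` = its inverse). -/
abbrev Word (X : Type*) := List (X × Bool)

/-- `IsProdOfConjRels R k g` : the free group element `g` is freely equal to a product
of `k` conjugates of relators in `R` or of their inverses. -/
def IsProdOfConjRels {X : Type*} (R : Set (FreeGroup X)) (k : ℕ) (g : FreeGroup X) : Prop :=
  ∃ (w r : Fin k → FreeGroup X) (ε : Fin k → ℤ),
    (∀ i, r i ∈ R) ∧ (∀ i, ε i = 1 ∨ ε i = -1) ∧
      g = (List.ofFn (fun i => w i * (r i) ^ (ε i) * (w i)⁻¹)).prod

/-- The (combinatorial) area of a free group element with respect to the relators `R`: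
the least number of conjugates of relators (or their inverses) whose product is freely
equal to `g`. -/
noncomputable def area {X : Type*} (R : Set (FreeGroup X)) (g : FreeGroup X) : ℕ :=
  sInf {k | IsProdOfConjRels R k g}

/-- The canonical projection from the free group onto the presented group `⟨X ∣ R⟩`. -/
def proj {X : Type*} (R : Set (FreeGroup X)) : FreeGroup X →* PresentedGroup R :=
  PresentedGroup.mk R

/-- The Dehn function of the presentation `⟨X ∣ R⟩`:
`dehn R n = max {area w : |w| ≤ n, w = 1 in ⟨X ∣ R⟩}`. -/
noncomputable def dehn {X : Type*} (R : Set (FreeGroup X)) (n : ℕ) : ℕ :=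
  sSup {A | ∃ w : Word X, w.length ≤ n ∧ proj R (FreeGroup.mk w) = 1 ∧
      A = area R (FreeGroup.mk w)}

/-- The conjugator length function of a group `G` marked by a map `φ` from a free group:
the least `N` such that any two words `u`, `v` of total length at most `n` representing
conjugate elements of `G` admit a conjugating word of length at most `N`. -/
noncomputable def conjLength {X G : Type*} [Group G] (φ : FreeGroup X →* G) (n : ℕ) : ℕ :=
  sInf {N | ∀ u v : Word X, u.length + v.length ≤ n →
      IsConj (φ (FreeGroup.mk u)) (φ (FreeGroup.mk v)) →
      ∃ w : Word X, w.length ≤ N ∧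
        φ (FreeGroup.mk w) * φ (FreeGroup.mk u) * (φ (FreeGroup.mk w))⁻¹ = φ (FreeGroup.mk v)}

/-- The conjugator length function of the presentation `⟨X ∣ R⟩`. -/
noncomputable def CL {X : Type*} (R : Set (FreeGroup X)) (n : ℕ) : ℕ :=
  conjLength (proj R) n

/-- `annPair R u v` : the annular area of the pair `u`, `v`, i.e. the minimum of
`area (γ * u * γ⁻¹ * v⁻¹)` over all conjugators `γ` with `γuγ⁻¹ = v` in `⟨X ∣ R⟩`. -/
noncomputable def annPair {X : Type*} (R : Set (FreeGroup X)) (u v : FreeGroup X) : ℕ :=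
  sInf {A | ∃ γ : FreeGroup X, proj R (γ * u * γ⁻¹) = proj R v ∧
      A = area R (γ * u * γ⁻¹ * v⁻¹)}

/-- The annular Dehn function of the presentation `⟨X ∣ R⟩`. -/
noncomputable def ann {X : Type*} (R : Set (FreeGroup X)) (n : ℕ) : ℕ :=
  sSup {A | ∃ u v : Word X, u.length + v.length ≤ n ∧
      IsConj (proj R (FreeGroup.mk u)) (proj R (FreeGroup.mk v)) ∧
      A = annPair R (FreeGroup.mk u) (FreeGroup.mk v)}

/-- `f ≼ g` : there is a constant `C > 0` with `f n ≤ C * g (C*n + n) + C*n + C`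
for all `n`. -/
def Dominates (f g : ℕ → ℕ) : Prop :=
  ∃ C : ℕ, 0 < C ∧ ∀ n, f n ≤ C * g (C * n + n) + C * n + C

/-- `f ≃ g` : `f ≼ g` and `g ≼ f`. -/
def Equivalent (f g : ℕ → ℕ) : Prop := Dominates f g ∧ Dominates g f

/-- The relators of `B = ⟨a, d, s ∣ asa⁻¹s⁻², dsd⁻¹s⁻²⟩`, with `a = 0`, `d = 1`, `s = 2`. -/
def bRels : Set (FreeGroup (Fin 3)) :=
  {FreeGroup.of (0 : Fin 3) * FreeGroup.of (2 : Fin 3) * (FreeGroup.of (0 : Fin 3))⁻¹ *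
      ((FreeGroup.of (2 : Fin 3)) ^ 2)⁻¹,
    FreeGroup.of (1 : Fin 3) * FreeGroup.of (2 : Fin 3) * (FreeGroup.of (1 : Fin 3))⁻¹ *
      ((FreeGroup.of (2 : Fin 3)) ^ 2)⁻¹}

section Words

variable {X G : Type*} [Group G] (φ : FreeGroup X →* G)

/-- The ball of radius `n` in the word metric of a group marked by `φ`. -/
def wordBall (n : ℕ) : Set G :=
  {g | ∃ w : Word X, w.length ≤ n ∧ φ (FreeGroup.mk w) = g}

lemma map_mk_append (u v : Word X) :
    φ (FreeGroup.mk (u ++ v)) = φ (FreeGroup.mk u) * φ (FreeGroup.mk v) := by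
  rw [← FreeGroup.mul_mk, map_mul]

lemma map_mk_cons (y : X × Bool) (w : Word X) :
    φ (FreeGroup.mk (y :: w)) = φ (FreeGroup.mk [y]) * φ (FreeGroup.mk w) :=
  map_mk_append φ [y] w

lemma map_mk_singleton_false (x : X) :
    φ (FreeGroup.mk [(x, false)]) = (φ (FreeGroup.of x))⁻¹ := by
  rw [← map_inv]
  rfl

variable {φ}

lemma map_mk_mem_wordBall {n : ℕ} {w : Word X} (hw : w.length ≤ n) :
    φ (FreeGroup.mk w) ∈ wordBall φ n :=
  ⟨w, hw, rfl⟩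

lemma wordBall_mono : Monotone (wordBall φ) :=
  fun _ _ hmn _ ⟨w, hw, hg⟩ => ⟨w, hw.trans hmn, hg⟩

lemma one_mem_wordBall (n : ℕ) : 1 ∈ wordBall φ n :=
  ⟨[], n.zero_le, map_one φ⟩

lemma map_of_mem_wordBall (x : X) : φ (FreeGroup.of x) ∈ wordBall φ 1 :=
  ⟨[(x, true)], le_rfl, rfl⟩

lemma mul_mem_wordBall {m n : ℕ} {g h : G} (hg : g ∈ wordBall φ m) (hh : h ∈ wordBall φ n) :
    g * h ∈ wordBall φ (m + n) := by
  obtain ⟨u, hu, rfl⟩ := hg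
  obtain ⟨v, hv, rfl⟩ := hh
  exact ⟨u ++ v, by rw [List.length_append]; omega, map_mk_append φ u v⟩

lemma inv_mem_wordBall {n : ℕ} {g : G} (hg : g ∈ wordBall φ n) : g⁻¹ ∈ wordBall φ n := by
  obtain ⟨u, hu, rfl⟩ := hg
  exact ⟨FreeGroup.invRev u, by rwa [FreeGroup.invRev_length], by rw [← FreeGroup.inv_mk, map_inv]⟩

lemma pow_mem_wordBall {g : G} (hg : g ∈ wordBall φ 1) (n : ℕ) : g ^ n ∈ wordBall φ n := by
  induction n with
  | zero => simpa using one_mem_wordBall 0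
  | succ n ih => rw [pow_succ]; exact mul_mem_wordBall ih hg

lemma wordBall_induction {P : ℕ → G → Prop} (one : ∀ n, P n 1)
    (of_mul : ∀ n g x, P n g → P (n + 1) (φ (FreeGroup.of x) * g))
    (inv_of_mul : ∀ n g x, P n g → P (n + 1) ((φ (FreeGroup.of x))⁻¹ * g))
    {n : ℕ} {g : G} (hg : g ∈ wordBall φ n) : P n g := by
  obtain ⟨w, hw, rfl⟩ := hg
  induction w generalizing n with
  | nil => exact (map_one φ).symm ▸ one n
  | cons y w ih =>
    obtain ⟨n, rfl⟩ := Nat.exists_eq_succ_of_ne_zero (Nat.ne_zero_of_lt hw)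
    have hP := ih (Nat.le_of_succ_le_succ hw)
    rw [map_mk_cons]
    obtain ⟨x, _ | _⟩ := y
    · rw [map_mk_singleton_false]
      exact inv_of_mul n _ x hP
    · exact of_mul n _ x hP

lemma map_mk_append_semiconjBy (u v : Word X) :
    SemiconjBy (φ (FreeGroup.mk v)) (φ (FreeGroup.mk (u ++ v))) (φ (FreeGroup.mk (v ++ u))) := by
  simp only [SemiconjBy, map_mk_append, mul_assoc]

lemma exists_semiconjBy_of_isRotated {u v : Word X} (h : u ~r v) :
    ∃ x ∈ wordBall φ u.length, SemiconjBy x (φ (FreeGroup.mk u)) (φ (FreeGroup.mk v)) := by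
  obtain ⟨n, hn, rfl⟩ := List.isRotated_iff_mod.1 h
  refine ⟨φ (FreeGroup.mk (u.drop n)), map_mk_mem_wordBall (List.drop_sublist n u).length_le, ?_⟩
  conv => enter [2, 2, 1]; rw [← List.take_append_drop n u]
  rw [List.rotate_eq_drop_append_take hn]
  exact map_mk_append_semiconjBy _ _

end Words

section TreeLength

/-- An integer-valued Lyndon length function: `ℓ g` is the distance from a base vertex to its
translate by `g⁻¹` for an action of `G` without inversions on a tree, so that `ℓ (g / h)` is the
distance between the translates by `g⁻¹` and `h⁻¹`. -/
structure IsTreeLength {G : Type*} [Group G] (ℓ : G → ℕ) : Prop where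
  map_one : ℓ 1 = 0
  map_inv : ∀ g, ℓ g⁻¹ = ℓ g
  even_add : ∀ g h, Even (ℓ g + ℓ h + ℓ (g / h))
  four_point : ∀ g h k, ℓ g + ℓ (h / k) ≤ max (ℓ h + ℓ (g / k)) (ℓ k + ℓ (g / h))

namespace IsTreeLength

variable {X G : Type*} [Group G] {φ : FreeGroup X →* G} {ℓ : G → ℕ}

lemma map_mk_singleton_le_one (hℓ : IsTreeLength ℓ) (hφ : ∀ x, ℓ (φ (FreeGroup.of x)) ≤ 1) :
    ∀ y, ℓ (φ (FreeGroup.mk [y])) ≤ 1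
  | (x, true) => hφ x
  | (x, false) => by rw [map_mk_singleton_false, hℓ.map_inv]; exact hφ x

/-- A path in a tree that stays at distance at least `m` from the root has endpoints with Gromov
product at least `m`. -/
lemma two_mul_add_le_of_forall_suffix (hℓ : IsTreeLength ℓ) (hφ : ∀ x, ℓ (φ (FreeGroup.of x)) ≤ 1)
    {m : ℕ} {g : G} {w : Word X} (hm : ∀ x, x <:+ w → m ≤ ℓ (φ (FreeGroup.mk x) * g)) :
    2 * m + ℓ (φ (FreeGroup.mk w)) ≤ ℓ g + ℓ (φ (FreeGroup.mk w) * g) := by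
  induction w with
  | nil =>
    have hg : m ≤ ℓ g := by simpa [← FreeGroup.one_eq_mk] using hm [] List.nil_suffix
    simp only [← FreeGroup.one_eq_mk, _root_.map_one, hℓ.map_one, one_mul]
    omega
  | cons y w ih =>
    have ih := ih fun x hx => hm x (hx.trans (List.suffix_cons y w))
    have hw := hm w (List.suffix_cons y w)
    have hyw := hm (y :: w) List.suffix_rfl
    have hy := hℓ.map_mk_singleton_le_one hφ y
    rw [map_mk_cons] at hyw ⊢
    set a := φ (FreeGroup.mk [y])
    set b := φ (FreeGroup.mk w)
    have four := hℓ.four_point (b * g) g (a * b * g)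
    have even := hℓ.even_add (b * g) (a * b * g)
    have h₁ : ℓ (b * g / (a * b * g)) = ℓ a := by
      rw [← hℓ.map_inv, inv_div, mul_assoc, mul_div_cancel_right]
    have h₂ : ℓ (g / (a * b * g)) = ℓ (a * b) := by
      rw [← hℓ.map_inv, inv_div, mul_div_cancel_right]
    have h₃ : b * g / g = b := mul_div_cancel_right b g
    rw [h₁, h₂, h₃] at four
    rw [h₁, Nat.even_iff] at even
    omega

/-- The four points `1`, `u`, `g` and `g * u = v * g` span a rectangle with sides `ℓ g`, `ℓ u`,
`ℓ g`, `ℓ v`, both of whose diagonals are as long as two adjacent sides together. In a tree such a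
rectangle is degenerate. -/
lemma eq_zero_or_of_semiconjBy (hℓ : IsTreeLength ℓ) {g u v : G} (hg : SemiconjBy g u v)
    (hu : ℓ g + ℓ u ≤ ℓ (u * g⁻¹)) (hv : ℓ g + ℓ v ≤ ℓ (v * g)) :
    ℓ g = 0 ∨ ℓ u = 0 ∧ ℓ v = 0 := by
  have four := hℓ.four_point (v * g) u g
  have h₁ : v * g / u = g := by rw [← hg.eq, mul_div_cancel_right]
  rw [h₁, mul_div_cancel_right, div_eq_mul_inv u] at four
  omega

/-- Minimising `ℓ g` over all conjugators `g` between rotations of `u` and of `v` makes `g` a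
shortest bridge between a `u'`-invariant and a `v'`-invariant subtree; a bridge that is not a single
vertex is unique, hence fixed by `u'` and `v'`. -/
theorem exists_isRotated_semiconjBy (hℓ : IsTreeLength ℓ) (hφ : ∀ x, ℓ (φ (FreeGroup.of x)) ≤ 1)
    {u v : Word X} (h : IsConj (φ (FreeGroup.mk u)) (φ (FreeGroup.mk v))) :
    ∃ u' v' g, u ~r u' ∧ v ~r v' ∧ SemiconjBy g (φ (FreeGroup.mk u')) (φ (FreeGroup.mk v')) ∧
      (ℓ g = 0 ∨ ℓ (φ (FreeGroup.mk u')) = 0 ∧ ℓ (φ (FreeGroup.mk v')) = 0) := by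
  obtain ⟨c, hc⟩ := h
  obtain ⟨⟨u', v', g⟩, ⟨hu, hv, hg⟩, hmin⟩ := exists_minimalFor_of_wellFoundedLT
    (fun p : Word X × Word X × G => u ~r p.1 ∧ v ~r p.2.1 ∧
      SemiconjBy p.2.2 (φ (FreeGroup.mk p.1)) (φ (FreeGroup.mk p.2.1)))
    (fun p => ℓ p.2.2) ⟨(u, v, c), .refl u, .refl v, hc⟩
  replace hmin {u₁ v₁ : Word X} {k : G} (hu₁ : u ~r u₁) (hv₁ : v ~r v₁)
      (hk : SemiconjBy k (φ (FreeGroup.mk u₁)) (φ (FreeGroup.mk v₁))) : ℓ g ≤ ℓ k :=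
    (le_total _ _).elim id (hmin (j := (u₁, v₁, k)) ⟨hu₁, hv₁, hk⟩)
  refine ⟨u', v', g, hu, hv, hg, hℓ.eq_zero_or_of_semiconjBy hg ?_ ?_⟩
  · have := hℓ.two_mul_add_le_of_forall_suffix hφ (g := g⁻¹) (w := u') (m := ℓ g) <| by
      rintro x ⟨y, rfl⟩
      rw [← hℓ.map_inv (_ * g⁻¹), mul_inv_rev, inv_inv]
      exact hmin (hu.trans List.isRotated_append) hv
        (hg.mul_left (map_mk_append_semiconjBy y x).inv_symm_left)
    rw [hℓ.map_inv] at this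
    omega
  · have := hℓ.two_mul_add_le_of_forall_suffix hφ (g := g) (w := v') (m := ℓ g) <| by
      rintro x ⟨y, rfl⟩
      exact hmin hu (hv.trans List.isRotated_append) ((map_mk_append_semiconjBy y x).mul_left hg)
    omega

end IsTreeLength

end TreeLength

section ListTree

variable {α : Type*} [DecidableEq α]

/-- The length of the longest common prefix of two lists: the Gromov product, based at the root, of
two vertices of the tree of lists. -/
def commonPrefixLength : List α → List α → ℕ
  | a :: L, b :: M => if a = b then commonPrefixLength L M + 1 else 0
  | _, _ => 0

lemma commonPrefixLength_nil (L : List α) : commonPrefixLength L [] = 0 := by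
  cases L <;> rfl

lemma commonPrefixLength_comm (L M : List α) :
    commonPrefixLength L M = commonPrefixLength M L := by
  induction L generalizing M with
  | nil => rw [commonPrefixLength_nil]; rfl
  | cons a L ih => cases M <;> simp [commonPrefixLength, ih, eq_comm]

lemma commonPrefixLength_self_append (L M : List α) :
    commonPrefixLength L (L ++ M) = L.length := by
  induction L with
  | nil => cases M <;> rfl
  | cons a L ih => simp [commonPrefixLength, ih]

lemma exists_eq_append_of_commonPrefixLength (L M : List α) :
    ∃ P L' M', L = P ++ L' ∧ M = P ++ M' ∧ P.length = commonPrefixLength L M := by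
  fun_induction commonPrefixLength L M with
  | case1 L a M ih =>
    obtain ⟨P, L', M', hL, hM, hP⟩ := ih
    exact ⟨a :: P, L', M', by rw [hL]; rfl, by rw [hM]; rfl, by rw [← hP]; rfl⟩
  | case2 a L b M => exact ⟨[], a :: L, b :: M, rfl, rfl, rfl⟩
  | case3 L M => exact ⟨[], L, M, rfl, rfl, rfl⟩

lemma commonPrefixLength_le_left (L M : List α) : commonPrefixLength L M ≤ L.length := by
  obtain ⟨P, L', M', rfl, rfl, hP⟩ := exists_eq_append_of_commonPrefixLength L M
  simp [← hP]

lemma min_commonPrefixLength_le (L M N : List α) :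
    min (commonPrefixLength L M) (commonPrefixLength M N) ≤ commonPrefixLength L N := by
  induction L generalizing M N with
  | nil => simp [commonPrefixLength]
  | cons a L ih => cases M <;> cases N <;> grind [commonPrefixLength]

/-- The distance between two vertices of the tree whose vertices are the lists over `α`, rooted at
`[]`, in which `a :: L` is a child of `L`. -/
def stackDist (L M : List α) : ℕ :=
  L.length + M.length - 2 * commonPrefixLength L.reverse M.reverse

lemma stackDist_add_two_mul (L M : List α) :
    stackDist L M + 2 * commonPrefixLength L.reverse M.reverse = L.length + M.length := by
  have hL := commonPrefixLength_le_left L.reverse M.reverse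
  have hM := commonPrefixLength_le_left M.reverse L.reverse
  rw [commonPrefixLength_comm] at hM
  rw [List.length_reverse] at hL hM
  unfold stackDist
  omega

lemma stackDist_comm (L M : List α) : stackDist L M = stackDist M L := by
  rw [stackDist, stackDist, commonPrefixLength_comm, add_comm L.length]

lemma stackDist_nil (L : List α) : stackDist L [] = L.length := by
  simp [stackDist, commonPrefixLength_nil]

lemma stackDist_append_self (L M : List α) : stackDist (L ++ M) M = L.length := by
  rw [stackDist_comm, stackDist, List.reverse_append, commonPrefixLength_self_append]
  simp only [List.length_append, List.length_reverse]
  omega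

lemma stackDist_triangle (L M N : List α) : stackDist L N ≤ stackDist L M + stackDist M N := by
  have hmin := min_commonPrefixLength_le L.reverse M.reverse N.reverse
  have hLM := commonPrefixLength_le_left M.reverse L.reverse
  have hMN := commonPrefixLength_le_left M.reverse N.reverse
  rw [commonPrefixLength_comm] at hLM
  rw [List.length_reverse] at hLM hMN
  have := stackDist_add_two_mul L M
  have := stackDist_add_two_mul M N
  have := stackDist_add_two_mul L N
  omega

lemma even_length_add_stackDist (L M : List α) : Even (L.length + M.length + stackDist L M) := by
  rw [Nat.even_iff]
  have := stackDist_add_two_mul L M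
  omega

lemma length_add_stackDist_le_max (L M N : List α) :
    L.length + stackDist M N ≤ max (M.length + stackDist L N) (N.length + stackDist L M) := by
  have hmin := min_commonPrefixLength_le M.reverse L.reverse N.reverse
  rw [commonPrefixLength_comm] at hmin
  have := stackDist_add_two_mul L M
  have := stackDist_add_two_mul L N
  have := stackDist_add_two_mul M N
  omega

lemma exists_eq_append_of_stackDist (L M : List α) :
    ∃ L' M' P, L = L' ++ P ∧ M = M' ++ P ∧ L'.length + M'.length = stackDist L M := by
  obtain ⟨P, L', M', hL, hM, hP⟩ := exists_eq_append_of_commonPrefixLength L.reverse M.reverse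
  refine ⟨L'.reverse, M'.reverse, P.reverse, ?_, ?_, ?_⟩
  · rw [← List.reverse_append, ← hL, List.reverse_reverse]
  · rw [← List.reverse_append, ← hM, List.reverse_reverse]
  · have := stackDist_add_two_mul L M
    have hL := congrArg List.length hL
    have hM := congrArg List.length hM
    simp only [List.length_append, List.length_reverse] at hL hM ⊢
    omega

end ListTree

section NormalForm

/-- The syllables `t i` (for `pos i`) and `(t i)⁻¹ * s ^ r` (for `neg i r`) of the normal forms of
the multiple HNN extension `⟨s, t i | t i * s * (t i)⁻¹ = s ^ m⟩`. -/
inductive Syllable (ι : Type*) (m : ℕ)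
  | pos (i : ι)
  | neg (i : ι) (r : Fin m)
  deriving DecidableEq

open Syllable

variable {ι : Type*} {m : ℕ}

section Reduced

variable [NeZero m]

/-- Britton's condition on two consecutive syllables: they do not contain a subword `t i * (t i)⁻¹`
or `(t i)⁻¹ * t i`. -/
def NoPinch : Syllable ι m → Syllable ι m → Prop
  | pos i, neg j _ => i ≠ j
  | neg i r, pos j => i = j → r ≠ 0
  | _, _ => True

variable (ι m) in
/-- Normal forms: `(k, [y₁, …, yₙ])` stands for `s ^ k * y₁ * ⋯ * yₙ`. -/
abbrev NormalForm := {x : ℤ × List (Syllable ι m) // x.2.IsChain NoPinch}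

/-- Left multiplication by `s ^ n` as a permutation of the set of normal forms. -/
def shiftPerm (n : ℤ) : Equiv.Perm (NormalForm ι m) where
  toFun x := ⟨(x.1.1 + n, x.1.2), x.2⟩
  invFun x := ⟨(x.1.1 - n, x.1.2), x.2⟩
  left_inv x := by simp
  right_inv x := by simp

lemma shiftPerm_one_pow (n : ℕ) :
    (shiftPerm 1 : Equiv.Perm (NormalForm ι m)) ^ n = shiftPerm n := by
  induction n with
  | zero => ext x <;> simp [shiftPerm]
  | succ n ih =>
    rw [pow_succ', ih]
    ext x <;> simp [shiftPerm, add_assoc]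

variable [DecidableEq ι]

/-- Left multiplication of a normal form by `t i`. -/
def consPos (i : ι) : ℤ × List (Syllable ι m) → ℤ × List (Syllable ι m)
  | (k, neg j r :: L) =>
    if i = j then ((Int.divModEquiv m).symm (k, r), L) else (k * m, pos i :: neg j r :: L)
  | (k, L) => (k * m, pos i :: L)

/-- Left multiplication of a normal form by `(t i)⁻¹`. -/
def consNeg (i : ι) : ℤ × List (Syllable ι m) → ℤ × List (Syllable ι m)
  | (k, pos j :: L) =>
    if i = j ∧ (Int.divModEquiv m k).2 = 0 then ((Int.divModEquiv m k).1, L)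
    else ((Int.divModEquiv m k).1, neg i (Int.divModEquiv m k).2 :: pos j :: L)
  | (k, L) => ((Int.divModEquiv m k).1, neg i (Int.divModEquiv m k).2 :: L)

lemma divModEquiv_mul (k : ℤ) : Int.divModEquiv m (k * m) = (k, 0) := by
  rw [← Equiv.eq_symm_apply]
  simp

lemma isChain_consPos (i : ι) {x : ℤ × List (Syllable ι m)} (hx : x.2.IsChain NoPinch) :
    (consPos i x).2.IsChain NoPinch := by
  rcases x with ⟨k, _ | ⟨j | ⟨j, r⟩, L⟩⟩
  · exact .singleton _
  · exact hx.cons_cons trivial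
  · rw [consPos]
    split_ifs with hij
    · exact hx.tail
    · exact hx.cons_cons hij

lemma isChain_consNeg (i : ι) {x : ℤ × List (Syllable ι m)} (hx : x.2.IsChain NoPinch) :
    (consNeg i x).2.IsChain NoPinch := by
  rcases x with ⟨k, _ | ⟨j | ⟨j, r⟩, L⟩⟩
  · exact .singleton _
  · rw [consNeg]
    split_ifs with hij
    · exact hx.tail
    · exact hx.cons_cons (not_and.1 hij)
  · exact hx.cons_cons trivial

lemma consNeg_consPos (i : ι) {x : ℤ × List (Syllable ι m)} (hx : x.2.IsChain NoPinch) :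
    consNeg i (consPos i x) = x := by
  rcases x with ⟨k, _ | ⟨j | ⟨j, r⟩, L⟩⟩
  · simp only [consPos, consNeg, divModEquiv_mul, and_self, if_true]
  · simp only [consPos, consNeg, divModEquiv_mul, and_self, if_true]
  · by_cases hij : i = j
    · subst hij
      rcases L with _ | ⟨j | ⟨j, r'⟩, L⟩
      · simp only [consPos, consNeg, if_true, Equiv.apply_symm_apply]
      · have hr : ¬(i = j ∧ r = 0) := not_and.2 (List.isChain_cons_cons.1 hx).1
        simp only [consPos, consNeg, if_true, Equiv.apply_symm_apply, hr, if_false]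
      · simp only [consPos, consNeg, if_true, Equiv.apply_symm_apply]
    · simp only [consPos, consNeg, hij, if_false, divModEquiv_mul, and_self, if_true]

lemma consPos_consNeg (i : ι) {x : ℤ × List (Syllable ι m)} (hx : x.2.IsChain NoPinch) :
    consPos i (consNeg i x) = x := by
  obtain ⟨k, L⟩ := x
  obtain ⟨⟨q, r⟩, rfl⟩ := (Int.divModEquiv m).symm.surjective k
  rcases L with _ | ⟨j | ⟨j, r'⟩, L⟩
  · simp only [consPos, consNeg, Equiv.apply_symm_apply, if_true]
  · by_cases hij : i = j ∧ r = 0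
    · obtain ⟨rfl, rfl⟩ := hij
      rw [← divModEquiv_mul, Equiv.symm_apply_apply]
      rcases L with _ | ⟨j | ⟨j, r'⟩, L⟩
      · simp only [consPos, consNeg, divModEquiv_mul, and_self, if_true]
      · simp only [consPos, consNeg, divModEquiv_mul, and_self, if_true]
      · have hij : i ≠ j := (List.isChain_cons_cons.1 hx).1
        simp only [consPos, consNeg, divModEquiv_mul, and_self, if_true, hij, if_false]
    · simp only [consPos, consNeg, Equiv.apply_symm_apply, hij, if_false, if_true]
  · simp only [consPos, consNeg, Equiv.apply_symm_apply, if_true]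

/-- Left multiplication by `t i` as a permutation of the set of normal forms. -/
def consPerm (i : ι) : Equiv.Perm (NormalForm ι m) where
  toFun x := ⟨consPos i x, isChain_consPos i x.2⟩
  invFun x := ⟨consNeg i x, isChain_consNeg i x.2⟩
  left_inv x := Subtype.ext (consNeg_consPos i x.2)
  right_inv x := Subtype.ext (consPos_consNeg i x.2)

lemma semiconjBy_consPerm (i : ι) :
    SemiconjBy (consPerm i) (shiftPerm 1 : Equiv.Perm (NormalForm ι m)) (shiftPerm 1 ^ m) := by
  rw [shiftPerm_one_pow]
  ext1 ⟨⟨k, L⟩, hL⟩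
  apply Subtype.ext
  change consPos i (k + 1, L) = ((consPos i (k, L)).1 + (m : ℤ), (consPos i (k, L)).2)
  rcases L with _ | ⟨j | ⟨j, r⟩, L⟩
  · simp [consPos, add_mul]
  · simp [consPos, add_mul]
  · by_cases hij : i = j
    · simp [consPos, hij, add_mul, add_right_comm]
    · simp [consPos, hij, add_mul]

lemma stackDist_consPos_le (i : ι) (x : ℤ × List (Syllable ι m)) :
    stackDist (consPos i x).2 x.2 ≤ 1 := by
  rcases x with ⟨k, _ | ⟨j | ⟨j, r⟩, L⟩⟩
  · exact (stackDist_append_self [pos i] []).le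
  · exact (stackDist_append_self [pos i] (pos j :: L)).le
  · rw [consPos]
    split_ifs
    · rw [stackDist_comm]
      exact (stackDist_append_self [neg j r] L).le
    · exact (stackDist_append_self [pos i] (neg j r :: L)).le

end Reduced

variable {G : Type*} [Group G]

/-- The value of a syllable in a group with chosen elements `s` and `t i`. -/
def Syllable.eval (s : G) (t : ι → G) : Syllable ι m → G
  | pos i => t i
  | neg i r => (t i)⁻¹ * s ^ (r : ℕ)

/-- The element `s ^ k * y₁ * ⋯ * yₙ` represented by `(k, [y₁, …, yₙ])`. -/
def evalForm (s : G) (t : ι → G) (x : ℤ × List (Syllable ι m)) : G :=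
  s ^ x.1 * (x.2.map (eval s t)).prod

variable [NeZero m]

lemma evalForm_shiftPerm_one (s : G) (t : ι → G) (x : NormalForm ι m) :
    evalForm s t (shiftPerm 1 x).1 = s * evalForm s t x.1 := by
  rw [evalForm, evalForm, ← mul_assoc, ← zpow_one_add, add_comm]
  rfl

lemma evalForm_consPos [DecidableEq ι] {s : G} {t : ι → G} (i : ι)
    (h : SemiconjBy (t i) s (s ^ m)) (x : ℤ × List (Syllable ι m)) :
    evalForm s t (consPos i x) = t i * evalForm s t x := by
  have hk (k : ℤ) : t i * s ^ k = s ^ (k * m) * t i := by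
    rw [mul_comm k, zpow_mul, zpow_natCast]
    exact h.zpow_right k
  rcases x with ⟨k, _ | ⟨j | ⟨j, r⟩, L⟩⟩
  · simp [consPos, evalForm, eval, hk]
  · simp [consPos, evalForm, eval, ← mul_assoc, hk]
  · by_cases hij : i = j
    · subst hij
      simp [consPos, evalForm, eval, ← mul_assoc, hk, zpow_add]
    · simp [consPos, evalForm, eval, ← mul_assoc, hij, hk]

end NormalForm

/-- The group `⟨a, d, s ∣ asa⁻¹s⁻², dsd⁻¹s⁻²⟩`. -/
abbrev B := PresentedGroup bRels

namespace B

/-- The generator `s`. -/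
def s : B := proj bRels (FreeGroup.of (Fin.last 2))

/-- The stable letters: `t 0` is the generator `a` and `t 1` is the generator `d`. -/
def t (i : Fin 2) : B := proj bRels (FreeGroup.of i.castSucc)

lemma mem_bRels_iff {r : FreeGroup (Fin 3)} :
    r ∈ bRels ↔ ∃ i : Fin 2, FreeGroup.of i.castSucc * FreeGroup.of (Fin.last 2) *
      (FreeGroup.of i.castSucc)⁻¹ * (FreeGroup.of (Fin.last 2) ^ 2)⁻¹ = r := by
  simp [bRels, Fin.exists_fin_two, eq_comm, Fin.last]

lemma semiconjBy_t (i : Fin 2) : SemiconjBy (t i) s (s ^ 2) := by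
  have hrel := PresentedGroup.one_of_mem (mem_bRels_iff.2 ⟨i, rfl⟩)
  rwa [map_mul, map_mul, map_mul, map_inv, map_inv, map_pow, mul_inv_eq_one, mul_inv_eq_iff_eq_mul]
    at hrel

section Lift

variable {G : Type*} [Group G] (x : G) (y : Fin 2 → G) (h : ∀ i, SemiconjBy (y i) x (x ^ 2))

/-- The universal property of `B`. -/
def lift : B →* G :=
  PresentedGroup.toGroup (f := Fin.lastCases x y) <| by
    intro r hr
    obtain ⟨i, rfl⟩ := mem_bRels_iff.1 hr
    simp only [map_mul, map_inv, map_pow, FreeGroup.lift_apply_of, Fin.lastCases_last,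
      Fin.lastCases_castSucc]
    rw [mul_inv_eq_one, mul_inv_eq_iff_eq_mul, (h i).eq]

@[simp]
lemma lift_s : lift x y h s = x :=
  (PresentedGroup.toGroup.of _).trans (Fin.lastCases_last ..)

@[simp]
lemma lift_t (i : Fin 2) : lift x y h (t i) = y i :=
  (PresentedGroup.toGroup.of _).trans (Fin.lastCases_castSucc ..)

end Lift

lemma mem_subgroup {H : Subgroup B} (hs : s ∈ H) (ht : ∀ i, t i ∈ H) (g : B) : g ∈ H :=
  PresentedGroup.generated_by bRels H (Fin.lastCases hs ht) g

section Stack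

/-- The action of `B` on normal forms by left multiplication. -/
def normalFormAction : B →* Equiv.Perm (NormalForm (Fin 2) 2) :=
  lift (shiftPerm 1) consPerm semiconjBy_consPerm

/-- The normal form of an element of `B`. -/
def normalForm (g : B) : NormalForm (Fin 2) 2 := normalFormAction g ⟨(0, []), .nil⟩

/-- The syllables of the normal form of `g`: the translate by `g⁻¹` of the base vertex of the
Bass–Serre tree, encoded as a vertex of the tree of lists of syllables. -/
def stack (g : B) : List (Syllable (Fin 2) 2) := (normalForm g).1.2

lemma normalForm_mul (g h : B) : normalForm (g * h) = normalFormAction g (normalForm h) := by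
  rw [normalForm, map_mul]
  rfl

lemma evalForm_normalFormAction (g : B) (x : NormalForm (Fin 2) 2) :
    evalForm s t (normalFormAction g x).1 = g * evalForm s t x.1 := by
  let H : Subgroup B :=
    { carrier := {g | ∀ x, evalForm s t (normalFormAction g x).1 = g * evalForm s t x.1}
      one_mem' := fun x => by simp
      mul_mem' := fun {g h} hg hh x => by rw [map_mul, Equiv.Perm.mul_apply, hg, hh, mul_assoc]
      inv_mem' := fun {g} hg x => by
        rw [eq_inv_mul_iff_mul_eq, ← hg, map_inv, ← Equiv.Perm.mul_apply, mul_inv_cancel,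
          Equiv.Perm.one_apply] }
  refine mem_subgroup (H := H) (fun x => ?_) (fun i x => ?_) g x
  · rw [normalFormAction, lift_s]
    exact evalForm_shiftPerm_one s t x
  · rw [normalFormAction, lift_t]
    exact evalForm_consPos i (semiconjBy_t i) x.1

lemma exists_eq_zpow_mul_prod_stack (g : B) :
    ∃ k : ℤ, g = s ^ k * ((stack g).map (Syllable.eval s t)).prod := by
  have h : evalForm s t (normalForm g).1 = g * evalForm s t (0, []) := evalForm_normalFormAction g _
  refine ⟨(normalForm g).1.1, ?_⟩
  simpa [evalForm, stack] using h.symm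

@[simp]
lemma stack_one : stack 1 = [] := by
  rw [stack, normalForm, map_one]
  rfl

lemma stack_s_mul (g : B) : stack (s * g) = stack g := by
  rw [stack, normalForm_mul, normalFormAction, lift_s]
  rfl

lemma stackDist_stack_t_mul_le (i : Fin 2) (g : B) : stackDist (stack (t i * g)) (stack g) ≤ 1 := by
  rw [stack, normalForm_mul, normalFormAction, lift_t]
  exact stackDist_consPos_le i _

lemma stack_s_zpow_mul (k : ℤ) (g : B) : stack (s ^ k * g) = stack g := by
  induction k with
  | zero => rw [zpow_zero, one_mul]
  | succ k ih => rw [add_comm, zpow_one_add, mul_assoc, stack_s_mul, ih]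
  | pred k ih =>
    rw [← ih, ← stack_s_mul, ← mul_assoc, ← zpow_one_add, add_sub_cancel]

lemma stackDist_stack_eval_mul_le (y : Syllable (Fin 2) 2) (g : B) :
    stackDist (stack (y.eval s t * g)) (stack g) ≤ 1 := by
  cases y with
  | pos i => exact stackDist_stack_t_mul_le i g
  | neg i r =>
    have h := stackDist_stack_t_mul_le i ((t i)⁻¹ * (s ^ (r : ℤ) * g))
    rw [mul_inv_cancel_left, stack_s_zpow_mul, stackDist_comm] at h
    rwa [Syllable.eval, mul_assoc, ← zpow_natCast]

lemma stackDist_stack_prod_mul_le (L : List (Syllable (Fin 2) 2)) (g : B) :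
    stackDist (stack ((L.map (Syllable.eval s t)).prod * g)) (stack g) ≤ L.length := by
  induction L with
  | nil => simpa using (stackDist_append_self [] (stack g)).le
  | cons y L ih =>
    rw [List.map_cons, List.prod_cons, mul_assoc, List.length_cons, add_comm]
    exact (stackDist_triangle _ _ _).trans (add_le_add (stackDist_stack_eval_mul_le y _) ih)

lemma stackDist_stack_mul_right_le (g h k : B) :
    stackDist (stack (g * k)) (stack (h * k)) ≤ stackDist (stack g) (stack h) := by
  obtain ⟨L, M, P, hL, hM, hdist⟩ := exists_eq_append_of_stackDist (stack g) (stack h)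
  obtain ⟨a, ha⟩ := exists_eq_zpow_mul_prod_stack g
  obtain ⟨b, hb⟩ := exists_eq_zpow_mul_prod_stack h
  rw [hL, List.map_append, List.prod_append] at ha
  rw [hM, List.map_append, List.prod_append] at hb
  rw [← hdist, ha, hb]
  simp only [mul_assoc, stack_s_zpow_mul]
  refine (stackDist_triangle _ _ _).trans (add_le_add (stackDist_stack_prod_mul_le L _) ?_)
  rw [stackDist_comm]
  exact stackDist_stack_prod_mul_le M _

lemma length_stack_div (g h : B) : (stack (g / h)).length = stackDist (stack g) (stack h) := by
  rw [← stackDist_nil, ← stack_one, div_eq_mul_inv, ← mul_inv_cancel h]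
  refine (stackDist_stack_mul_right_le g h h⁻¹).antisymm ?_
  simpa only [inv_mul_cancel_right] using stackDist_stack_mul_right_le (g * h⁻¹) (h * h⁻¹) h

theorem isTreeLength_length_stack : IsTreeLength fun g : B => (stack g).length where
  map_one := by rw [stack_one, List.length_nil]
  map_inv g := by rw [← one_div, length_stack_div, stackDist_comm, stack_one, stackDist_nil]
  even_add g h := by rw [length_stack_div]; exact even_length_add_stackDist _ _
  four_point g h k := by simp only [length_stack_div]; exact length_add_stackDist_le_max _ _ _

lemma length_stack_of_le_one (x : Fin 3) :
    (stack (proj bRels (FreeGroup.of x))).length ≤ 1 := by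
  induction x using Fin.lastCases with
  | last =>
    have h := stack_s_mul 1
    rw [mul_one, stack_one] at h
    exact h ▸ Nat.zero_le 1
  | cast i =>
    have h := stackDist_stack_t_mul_le i 1
    rwa [mul_one, stack_one, stackDist_nil] at h

lemma exists_eq_zpow_of_length_stack_eq_zero {g : B} (hg : (stack g).length = 0) :
    ∃ k : ℤ, g = s ^ k := by
  simpa [List.length_eq_zero_iff.1 hg] using exists_eq_zpow_mul_prod_stack g

end Stack

local notation "ball" => wordBall (proj bRels)

lemma ball_induction {P : ℕ → B → Prop} (one : ∀ n, P n 1)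
    (s_mul : ∀ n g, P n g → P (n + 1) (s * g)) (s_inv_mul : ∀ n g, P n g → P (n + 1) (s⁻¹ * g))
    (t_mul : ∀ n g i, P n g → P (n + 1) (t i * g))
    (t_inv_mul : ∀ n g i, P n g → P (n + 1) ((t i)⁻¹ * g))
    {n : ℕ} {g : B} (hg : g ∈ ball n) : P n g :=
  wordBall_induction one
    (fun n g x hP => Fin.lastCases (motive := fun x => P (n + 1) (proj bRels (.of x) * g))
      (s_mul n g hP) (t_mul n g · hP) x)
    (fun n g x hP => Fin.lastCases (motive := fun x => P (n + 1) ((proj bRels (.of x))⁻¹ * g))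
      (s_inv_mul n g hP) (t_inv_mul n g · hP) x)
    hg

section Affine

/-- The exponent sum of the stable letters. -/
def height : B →* Multiplicative ℤ :=
  lift 1 (fun _ => Multiplicative.ofAdd 1) fun _ => by simp

lemma semiconjBy_mulLeft_two_addRight_one :
    SemiconjBy (Equiv.mulLeft₀ (2 : ℚ) two_ne_zero) (Equiv.addRight 1) (Equiv.addRight 1 ^ 2) := by
  ext x
  change 2 * (x + 1) = 2 * x + 1 + 1
  ring

/-- The affine action on the line, in which `s` acts by `x ↦ x + 1` and both stable letters by
`x ↦ 2 * x`. -/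
def affineAction : B →* Equiv.Perm ℚ :=
  lift (Equiv.addRight 1) (fun _ => Equiv.mulLeft₀ 2 two_ne_zero) fun _ =>
    semiconjBy_mulLeft_two_addRight_one

lemma affineAction_s_zpow (k : ℤ) (x : ℚ) : affineAction (s ^ k) x = x + k := by
  rw [map_zpow, affineAction, lift_s]
  simp

lemma affineAction_t (i : Fin 2) (x : ℚ) : affineAction (t i) x = 2 * x := by
  rw [affineAction, lift_t]
  rfl

lemma affineAction_t_inv (i : Fin 2) (x : ℚ) : affineAction (t i)⁻¹ x = x / 2 := by
  rw [map_inv, Equiv.Perm.inv_eq_iff_eq, affineAction_t]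
  ring

lemma affineAction_mul (g h : B) (x : ℚ) :
    affineAction (g * h) x = affineAction g (affineAction h x) := by
  rw [map_mul]
  rfl

lemma affineAction_apply (g : B) (x : ℚ) :
    affineAction g x = 2 ^ (height g).toAdd * x + affineAction g 0 := by
  let H : Subgroup B :=
    { carrier := {g | ∀ x, affineAction g x = 2 ^ (height g).toAdd * x + affineAction g 0}
      one_mem' := fun x => by simp
      mul_mem' := fun {g h} hg hh x => by
        rw [affineAction_mul, affineAction_mul, hh x, hg, hg (affineAction h 0), map_mul, toAdd_mul,
          zpow_add₀ two_ne_zero]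
        ring
      inv_mem' := fun {g} hg x => by
        apply (affineAction g).injective
        rw [hg (_ + _), mul_add, add_assoc, ← hg, ← affineAction_mul, ← affineAction_mul,
          mul_inv_cancel, map_inv, toAdd_inv, zpow_neg, mul_inv_cancel_left₀ (by positivity)]
        simp }
  refine mem_subgroup (H := H) (fun x => ?_) (fun i x => ?_) g x
  · have h := affineAction_s_zpow 1
    rw [zpow_one] at h
    simp [height, h]
  · simp [height, affineAction_t]

lemma cast_eq_of_semiconjBy_zpow {g : B} {k l : ℤ} (h : SemiconjBy g (s ^ k) (s ^ l)) :
    (l : ℚ) = 2 ^ (height g).toAdd * k := by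
  have h₀ := congrArg (affineAction · 0) h.eq
  simp only [affineAction_mul, affineAction_s_zpow, affineAction_apply g (0 + k)] at h₀
  linarith

lemma abs_affineAction_zero_le {n : ℕ} {g : B} (hg : g ∈ ball n) : |affineAction g 0| ≤ 2 ^ n := by
  have one_le (n : ℕ) : (1 : ℚ) ≤ 2 ^ n := one_le_pow₀ one_le_two
  refine ball_induction (P := fun n g => |affineAction g 0| ≤ 2 ^ n) (fun n => by simp)
    (fun n g ih => ?_) (fun n g ih => ?_) (fun n g i ih => ?_) (fun n g i ih => ?_) hg
  · rw [affineAction_mul, ← zpow_one s, affineAction_s_zpow, pow_succ]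
    rw [abs_le] at ih ⊢
    constructor <;> push_cast <;> linarith [one_le n]
  · rw [affineAction_mul, ← zpow_neg_one s, affineAction_s_zpow, pow_succ]
    rw [abs_le] at ih ⊢
    constructor <;> push_cast <;> linarith [one_le n]
  · rw [affineAction_mul, affineAction_t, pow_succ]
    rw [abs_le] at ih ⊢
    constructor <;> linarith
  · rw [affineAction_mul, affineAction_t_inv, pow_succ]
    rw [abs_le] at ih ⊢
    constructor <;> linarith

end Affine

section Powers

lemma s_mem_wordBall : s ∈ ball 1 := map_of_mem_wordBall (Fin.last 2)

lemma t_mem_wordBall (i : Fin 2) : t i ∈ ball 1 := map_of_mem_wordBall i.castSucc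

lemma semiconjBy_t_zpow (i : Fin 2) (k : ℤ) : SemiconjBy (t i) (s ^ k) (s ^ (2 * k)) := by
  rw [zpow_mul]
  exact (semiconjBy_t i).zpow_right k

lemma semiconjBy_t_pow_zpow (i : Fin 2) (j : ℕ) (k : ℤ) :
    SemiconjBy (t i ^ j) (s ^ k) (s ^ (2 ^ j * k)) := by
  induction j with
  | zero => simp
  | succ j ih =>
    rw [pow_succ', pow_succ', mul_assoc]
    exact (semiconjBy_t_zpow i _).mul_left ih

lemma exists_semiconjBy_zpow_two_pow {n : ℕ} {g : B} (hg : g ∈ ball n) (j : ℕ) (k : ℤ) :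
    ∃ l : ℤ, SemiconjBy g (s ^ (2 ^ (n + j) * k)) (s ^ (2 ^ j * l)) := by
  refine ball_induction
    (P := fun n g => ∀ j, ∃ l : ℤ, SemiconjBy g (s ^ (2 ^ (n + j) * k)) (s ^ (2 ^ j * l)))
    (fun n j => ⟨2 ^ n * k, ?_⟩) (fun n g ih j => ?_) (fun n g ih j => ?_) (fun n g i ih j => ?_)
    (fun n g i ih j => ?_) hg j
  · rw [pow_add, mul_left_comm, mul_assoc]
    exact .one_left _
  · obtain ⟨l, hl⟩ := ih (j + 1)
    refine ⟨2 * l, ?_⟩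
    rw [add_right_comm, ← mul_assoc, ← pow_succ]
    exact ((Commute.refl s).zpow_right _).semiconjBy.mul_left hl
  · obtain ⟨l, hl⟩ := ih (j + 1)
    refine ⟨2 * l, ?_⟩
    rw [add_right_comm, ← mul_assoc, ← pow_succ]
    exact ((Commute.refl s).inv_left.zpow_right _).semiconjBy.mul_left hl
  · obtain ⟨l, hl⟩ := ih (j + 1)
    refine ⟨2 * (2 * l), ?_⟩
    rw [add_right_comm, mul_left_comm, ← mul_assoc _ 2 l, ← pow_succ]
    exact (semiconjBy_t_zpow i _).mul_left hl
  · obtain ⟨l, hl⟩ := ih (j + 1)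
    refine ⟨l, ?_⟩
    rw [pow_succ', mul_assoc] at hl
    rw [add_right_comm]
    exact (semiconjBy_t_zpow i _).inv_symm_left.mul_left hl

lemma commute_s_zpow_two_pow {n : ℕ} {g : B} (hg : g ∈ ball n) (h : height g = 1) :
    Commute g (s ^ (2 ^ n : ℤ)) := by
  obtain ⟨l, hl⟩ := exists_semiconjBy_zpow_two_pow hg 0 1
  have hn := cast_eq_of_semiconjBy_zpow hl
  rw [h, toAdd_one, zpow_zero, one_mul, Int.cast_inj] at hn
  rwa [hn, add_zero, mul_one] at hl

lemma s_zpow_mem_wordBall {N : ℕ} {p : ℤ} (hp : |p| ≤ 2 ^ N) : s ^ p ∈ ball (3 * N + 1) := by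
  induction N generalizing p with
  | zero =>
    obtain rfl | rfl | rfl : p = -1 ∨ p = 0 ∨ p = 1 := by rw [abs_le] at hp; omega
    · simpa using inv_mem_wordBall s_mem_wordBall
    · simpa using one_mem_wordBall _
    · simpa using s_mem_wordBall
  | succ N ih =>
    have hq : s ^ (p / 2) ∈ ball (3 * N + 1) := ih (by rw [pow_succ, abs_le] at *; omega)
    have hr : s ^ (p % 2) ∈ ball 1 := by
      obtain h | h := Int.emod_two_eq p
      · simpa [h] using one_mem_wordBall 1
      · simpa [h] using s_mem_wordBall
    have hp : s ^ p = t 0 * s ^ (p / 2) * (t 0)⁻¹ * s ^ (p % 2) := by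
      rw [(semiconjBy_t_zpow 0 _).eq, mul_inv_cancel_right, ← zpow_add, Int.mul_ediv_add_emod]
    rw [hp]
    refine wordBall_mono ?_ (mul_mem_wordBall (mul_mem_wordBall (mul_mem_wordBall
      (t_mem_wordBall 0) hq) (inv_mem_wordBall (t_mem_wordBall 0))) hr)
    omega

end Powers

section ShortConjugators

lemma half_le_abs_two_zpow_sub_one {k : ℤ} (hk : k ≠ 0) : (1 / 2 : ℚ) ≤ |2 ^ k - 1| := by
  obtain hk | hk := hk.lt_or_gt
  · have : (2 : ℚ) ^ k ≤ 2 ^ (-1 : ℤ) := zpow_le_zpow_right₀ one_le_two (by omega)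
    rw [abs_sub_comm]
    refine le_trans ?_ (le_abs_self _)
    norm_num at this
    linarith
  · have : (2 : ℚ) ^ (1 : ℤ) ≤ 2 ^ k := zpow_le_zpow_right₀ one_le_two (by omega)
    refine le_trans ?_ (le_abs_self _)
    norm_num at this
    linarith

lemma abs_le_of_semiconjBy_zpow {n : ℕ} {u v : B} {p : ℤ} (hu : u ∈ ball n) (hv : v ∈ ball n)
    (h : SemiconjBy (s ^ p) u v) (hheight : height v ≠ 1) : |p| ≤ 2 ^ (n + 2) := by
  have hu₀ := abs_affineAction_zero_le hu
  have hv₀ := abs_affineAction_zero_le hv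
  have h₀ := congrArg (affineAction · 0) h.eq
  simp only [affineAction_mul, affineAction_s_zpow, affineAction_apply v (0 + p)] at h₀
  have hhalf := half_le_abs_two_zpow_sub_one (k := (height v).toAdd) (by simpa using hheight)
  have hprod : |(2 : ℚ) ^ (height v).toAdd - 1| * |(p : ℚ)| ≤ 2 * 2 ^ n := by
    rw [← abs_mul]
    calc |((2 : ℚ) ^ (height v).toAdd - 1) * p| = |affineAction u 0 - affineAction v 0| := by
          congr 1; linarith
      _ ≤ |affineAction u 0| + |affineAction v 0| := abs_sub _ _
      _ ≤ 2 * 2 ^ n := by linarith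
  have hp := mul_le_mul_of_nonneg_right hhalf (abs_nonneg (p : ℚ))
  have hp' : |(p : ℚ)| ≤ 2 ^ (n + 2) := by rw [pow_add]; linarith
  exact_mod_cast hp'

lemma exists_semiconjBy_of_semiconjBy_zpow {n : ℕ} {u v : B} {p : ℤ} (hu : u ∈ ball n)
    (hv : v ∈ ball n) (h : SemiconjBy (s ^ p) u v) :
    ∃ y ∈ ball (3 * (n + 2) + 1), SemiconjBy y u v := by
  by_cases hheight : height v = 1
  · have hmod : s ^ (p % 2 ^ n) = (s ^ (2 ^ n : ℤ)) ^ (-(p / 2 ^ n)) * s ^ p := by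
      rw [← zpow_mul, ← zpow_add]
      congr 1
      linarith [Int.emod_add_mul_ediv p (2 ^ n)]
    refine ⟨s ^ (p % 2 ^ n), s_zpow_mem_wordBall ?_, ?_⟩
    · have hpos : (0 : ℤ) < 2 ^ n := by positivity
      rw [abs_of_nonneg (Int.emod_nonneg p hpos.ne')]
      exact (Int.emod_lt_of_pos p hpos).le.trans (pow_le_pow_right₀ one_le_two (by omega))
    · rw [hmod]
      exact ((commute_s_zpow_two_pow hv hheight).zpow_right _).symm.semiconjBy.mul_left h
  · exact ⟨s ^ p, s_zpow_mem_wordBall (abs_le_of_semiconjBy_zpow hu hv h hheight), h⟩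

lemma exists_semiconjBy_zpow_two_pow_mul {n j : ℕ} {k : ℤ} (h : s ^ (2 ^ j * k) ∈ ball n) :
    ∃ y ∈ ball n, SemiconjBy y (s ^ k) (s ^ (2 ^ j * k)) := by
  obtain rfl | hk := eq_or_ne k 0
  · exact ⟨1, one_mem_wordBall n, by simp⟩
  have hjk : |2 ^ j * k| ≤ 2 ^ n := by
    have := abs_affineAction_zero_le h
    rw [affineAction_s_zpow, zero_add] at this
    exact_mod_cast this
  have hjn : j ≤ n := by
    rw [abs_mul, abs_pow, abs_two] at hjk
    refine (pow_le_pow_iff_right₀ one_lt_two).1 ((le_mul_of_one_le_right ?_ ?_).trans hjk)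
    · positivity
    · exact Int.one_le_abs hk
  exact ⟨t 0 ^ j, wordBall_mono hjn (pow_mem_wordBall (t_mem_wordBall 0) j),
    semiconjBy_t_pow_zpow 0 j k⟩

lemma exists_semiconjBy_zpow_zpow {n : ℕ} {g : B} {k l : ℤ} (hk : s ^ k ∈ ball n)
    (hl : s ^ l ∈ ball n) (h : SemiconjBy g (s ^ k) (s ^ l)) :
    ∃ y ∈ ball n, SemiconjBy y (s ^ k) (s ^ l) := by
  have hkl := cast_eq_of_semiconjBy_zpow h
  obtain ⟨j, hj | hj⟩ := (height g).toAdd.eq_nat_or_neg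
  · obtain rfl : l = 2 ^ j * k := by rw [hj, zpow_natCast] at hkl; exact_mod_cast hkl
    exact exists_semiconjBy_zpow_two_pow_mul hl
  · obtain rfl : k = 2 ^ j * l := by
      rw [hj, zpow_neg, zpow_natCast, eq_inv_mul_iff_mul_eq₀ (by positivity)] at hkl
      exact_mod_cast hkl.symm
    obtain ⟨y, hy, hyl⟩ := exists_semiconjBy_zpow_two_pow_mul hk
    exact ⟨y⁻¹, inv_mem_wordBall hy, hyl.inv_symm_left⟩

theorem exists_mem_wordBall_semiconjBy {n : ℕ} {u v : Word (Fin 3)} (hu : u.length ≤ n)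
    (hv : v.length ≤ n) (h : IsConj (proj bRels (FreeGroup.mk u)) (proj bRels (FreeGroup.mk v))) :
    ∃ w ∈ ball (5 * n + 7),
      SemiconjBy w (proj bRels (FreeGroup.mk u)) (proj bRels (FreeGroup.mk v)) := by
  obtain ⟨u', v', g, huu', hvv', hg, hlength⟩ :=
    isTreeLength_length_stack.exists_isRotated_semiconjBy length_stack_of_le_one h
  obtain ⟨x, hx, hxu⟩ := exists_semiconjBy_of_isRotated (φ := proj bRels) huu'
  obtain ⟨z, hz, hzv⟩ := exists_semiconjBy_of_isRotated (φ := proj bRels) hvv'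
  have hu' : _ ∈ ball n := map_mk_mem_wordBall (huu'.perm.length_eq ▸ hu)
  have hv' : _ ∈ ball n := map_mk_mem_wordBall (hvv'.perm.length_eq ▸ hv)
  obtain ⟨y, hy, hyu⟩ : ∃ y ∈ ball (3 * (n + 2) + 1),
      SemiconjBy y (proj bRels (FreeGroup.mk u')) (proj bRels (FreeGroup.mk v')) := by
    obtain hg₀ | ⟨hu₀, hv₀⟩ := hlength
    · obtain ⟨p, rfl⟩ := exists_eq_zpow_of_length_stack_eq_zero hg₀
      exact exists_semiconjBy_of_semiconjBy_zpow hu' hv' hg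
    · obtain ⟨k, hk⟩ := exists_eq_zpow_of_length_stack_eq_zero hu₀
      obtain ⟨l, hl⟩ := exists_eq_zpow_of_length_stack_eq_zero hv₀
      rw [hk] at hu' hg ⊢
      rw [hl] at hv' hg ⊢
      obtain ⟨y, hy, hyu⟩ := exists_semiconjBy_zpow_zpow hu' hv' hg
      exact ⟨y, wordBall_mono (by omega) hy, hyu⟩
  have hzyx := mul_mem_wordBall (mul_mem_wordBall (inv_mem_wordBall hz) hy) hx
  refine ⟨z⁻¹ * y * x, wordBall_mono ?_ hzyx, (hzv.inv_symm_left.mul_left hyu).mul_left hxu⟩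
  omega

end ShortConjugators

end B

/-- **Linear bound on the conjugator length function of `B`.** `CL_B(n) ≼ n`:
there is `C > 0` such that whenever words `u`, `v` with `|u| + |v| ≤ n` represent
conjugate elements of `B`, some word `w` with `|w| ≤ C·n + C` satisfies `wuw⁻¹ = v`
in `B`. -/
theorem b_cl_linear :
    ∃ C : ℕ, 0 < C ∧ ∀ n : ℕ, ∀ u v : Word (Fin 3),
      u.length + v.length ≤ n →
      IsConj (proj bRels (FreeGroup.mk u)) (proj bRels (FreeGroup.mk v)) →
      ∃ w : Word (Fin 3), w.length ≤ C * n + C ∧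
        proj bRels (FreeGroup.mk w) * proj bRels (FreeGroup.mk u) *
          (proj bRels (FreeGroup.mk w))⁻¹ = proj bRels (FreeGroup.mk v) := by
  refine ⟨7, by norm_num, fun n u v hn h => ?_⟩
  obtain ⟨_, ⟨w, hw, rfl⟩, hwu⟩ :=
    B.exists_mem_wordBall_semiconjBy (n := n) (by omega) (by omega) h
  exact ⟨w, by omega, mul_inv_eq_iff_eq_mul.2 hwu⟩

end AnnDehn
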